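/- Let occ(σ) be the number of occurrences in σ of the mesh pattern Nr. 20, where an occurrence is a pair of indices i < j with a = σ_i < σ_j = b such that: i = 1 (there is no position before i); every element strictly between positions i and j has value less than a; and every element after position j has value greater than b. Let E(t,u) = Σ_{n≥0} t^n Σ_{σ∈K_n} u^{occ(σ)}. Then (1+t)^2·E(t,u) = ((1+t)^2 + t^2(1−u)(1+t) − t^2(1−u)·A(t))·A(t) as formal power series in t over ℚ[u]. -/

import Mathlib

/-- A permutation of `{0, …, n-1}` is a *king permutation* if consecutive entries
differ by more than 1 in absolute value. -/
def IsKing {n : ℕ} (σ : Equiv.Perm (Fin n)) : Prop :=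
  ∀ i : Fin n, ∀ h : (i : ℕ) + 1 < n,
    1 < |((σ ⟨(i : ℕ) + 1, h⟩ : ℕ) : ℤ) - ((σ i : ℕ) : ℤ)|

/-- `kingCount n = A_n`, the number of king permutations of length `n`. -/
noncomputable def kingCount (n : ℕ) : ℕ :=
  Nat.card {σ : Equiv.Perm (Fin n) // IsKing σ}

/-- `A(t)` regarded as a power series over `ℚ[u]` (constant-polynomial coefficients). -/
noncomputable def kingAu : PowerSeries (Polynomial ℚ) :=
  PowerSeries.mk fun n => (kingCount n : Polynomial ℚ)

/-- `u` viewed as a constant power series over `ℚ[u]`. -/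
noncomputable def U : PowerSeries (Polynomial ℚ) :=
  PowerSeries.C (R := Polynomial ℚ) Polynomial.X

/-- `t`, the power series variable. -/
noncomputable def T : PowerSeries (Polynomial ℚ) :=
  PowerSeries.X

/-- An occurrence of the mesh pattern Nr. 20 in `σ`. -/
def OccP {n : ℕ} (σ : Equiv.Perm (Fin n)) (i j : Fin n) : Prop :=
  i < j ∧ σ i < σ j ∧
    (∀ k : Fin n, ¬ k < i) ∧
    (∀ k : Fin n, i < k → k < j → σ k < σ i) ∧
    (∀ k : Fin n, j < k → σ j < σ k)

/-- The number of occurrences of the mesh pattern Nr. 20 in `σ`. -/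
noncomputable def occP {n : ℕ} (σ : Equiv.Perm (Fin n)) : ℕ :=
  Nat.card {p : Fin n × Fin n // OccP σ p.1 p.2}

-- `E(t,u) = Σ_{n≥0} t^n Σ_{σ∈K_n} u^{occ(σ)}`, a power series in `t` over `ℚ[u]`.
open Classical in
noncomputable def Etu : PowerSeries (Polynomial ℚ) :=
  PowerSeries.mk fun n =>
    ∑ σ : Equiv.Perm (Fin n),
      if IsKing σ then (Polynomial.X : Polynomial ℚ) ^ occP σ else 0

/-!
Count positions and values from `0`. An occurrence of the pattern consists of the first position
and a position `p`, and it exists precisely when `σ = π ⊕ τ` with `π` of length `p` starting with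
its maximum and `τ` starting with its minimum. The first position is fixed and `p` is one more than
the first value, so there is at most one occurrence and `u ^ occ(σ) = 1 - (1 - u) * occ(σ)`.

The two entries adjacent across the junction of `π ⊕ τ` violate the king condition only if `π` ends
with its maximum and `τ` starts with its minimum. Here `π` starts with its maximum, so this rules
out only `p = 1`. With `M` the series of king permutations starting with their minimum (by reversing
values, also of those starting with their maximum), this gives
`E = A - (1 - u) * (M - t) * M`. Removing a leading minimum gives `(1 + t) * M = t * A`.
-/

section StartsAndEnds

variable {α : Type*} [LE α]

/-- The permutation `σ` maps a least element to a least element: as a word, it starts with its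
minimum. The empty permutation does not. -/
def StartsWithMin (σ : Equiv.Perm α) : Prop :=
  ∃ i, IsBot i ∧ IsBot (σ i)

/-- The permutation `σ` maps a least element to a greatest element: as a word, it starts with its
maximum. The empty permutation does not. -/
def StartsWithMax (σ : Equiv.Perm α) : Prop :=
  ∃ i, IsBot i ∧ IsTop (σ i)

/-- The permutation `σ` maps a greatest element to a greatest element: as a word, it ends with its
maximum. The empty permutation does not. -/
def EndsWithMax (σ : Equiv.Perm α) : Prop :=
  ∃ i, IsTop i ∧ IsTop (σ i)

end StartsAndEnds

theorem isTop_apply_iff_of_isBot {α β : Type*} [PartialOrder α] [LinearOrder β] (σ : α ≃ β) {i : α}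
    (hi : IsBot i) : IsTop (σ i) ↔ ∀ k, i < k → σ k < σ i := by
  constructor
  · intro htop k hk
    exact (htop (σ k)).lt_of_ne (σ.injective.ne hk.ne')
  · intro h v
    obtain ⟨k, rfl⟩ := σ.surjective v
    rcases (hi k).eq_or_lt with rfl | hk
    · exact le_rfl
    · exact (h k hk).le

theorem isBot_apply_iff_of_isBot {α β : Type*} [PartialOrder α] [LinearOrder β] (σ : α ≃ β) {i : α}
    (hi : IsBot i) : IsBot (σ i) ↔ ∀ k, i < k → σ i < σ k :=
  isTop_apply_iff_of_isBot (σ.trans OrderDual.toDual) hi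

theorem isBot_iff_val_eq_zero {n : ℕ} {i : Fin n} : IsBot i ↔ (i : ℕ) = 0 := by
  refine ⟨fun h => Nat.eq_zero_of_le_zero (h ⟨0, i.pos⟩), fun h k => ?_⟩
  rw [Fin.le_def]
  omega

theorem isTop_iff_val_add_one_eq {n : ℕ} {i : Fin n} : IsTop i ↔ (i : ℕ) + 1 = n := by
  refine ⟨fun h => ?_, fun h k => ?_⟩
  · have : n - 1 ≤ i := h ⟨n - 1, Nat.sub_lt i.pos one_pos⟩
    omega
  · rw [Fin.le_def]
    omega

theorem endsWithMax_iff_of_startsWithMax {n : ℕ} {σ : Equiv.Perm (Fin n)} (h : StartsWithMax σ) :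
    EndsWithMax σ ↔ n = 1 := by
  obtain ⟨i, hi, hσi⟩ := h
  constructor
  · rintro ⟨j, hj, hσj⟩
    have hij : i = j := σ.injective ((hσj _).antisymm (hσi _))
    rw [isBot_iff_val_eq_zero] at hi
    rw [← hij, isTop_iff_val_add_one_eq] at hj
    omega
  · rintro rfl
    exact ⟨i, fun k => (Subsingleton.elim k i).le, hσi⟩

theorem isKing_iff_covBy {n : ℕ} {σ : Equiv.Perm (Fin n)} :
    IsKing σ ↔ ∀ i j, i ⋖ j → ¬ σ i ⋖ σ j ∧ ¬ σ j ⋖ σ i := by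
  simp only [Fin.covBy_iff, Nat.covBy_iff_add_one_eq]
  constructor
  · rintro h i ⟨j, hj⟩ rfl
    have := lt_abs.mp (h i hj)
    omega
  · intro h i hi
    have hne : (σ i : ℕ) ≠ σ ⟨i + 1, hi⟩ :=
      Fin.val_injective.ne (σ.injective.ne (by simp [Fin.ext_iff]))
    have := h i ⟨i + 1, hi⟩ rfl
    rw [lt_abs]
    omega

theorem isKing_of_subsingleton {n : ℕ} [Subsingleton (Fin n)] (σ : Equiv.Perm (Fin n)) :
    IsKing σ :=
  isKing_iff_covBy.mpr fun _ _ hij => (hij.ne (Subsingleton.elim _ _)).elim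

theorem isKing_revPerm_mul_iff {n : ℕ} {σ : Equiv.Perm (Fin n)} :
    IsKing (Fin.revPerm * σ) ↔ IsKing σ := by
  have rev_covBy_rev (a b : Fin n) : a.rev ⋖ b.rev ↔ b ⋖ a :=
    (apply_covBy_apply_iff Fin.revOrderIso).trans toDual_covBy_toDual_iff
  simp only [isKing_iff_covBy, Equiv.Perm.mul_apply, Fin.revPerm_apply, rev_covBy_rev,
    and_comm]

theorem startsWithMin_revPerm_mul_iff {n : ℕ} {σ : Equiv.Perm (Fin n)} :
    StartsWithMin (Fin.revPerm * σ) ↔ StartsWithMax σ := by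
  have isBot_rev (a : Fin n) : IsBot a.rev ↔ IsTop a := by
    rw [isBot_iff_val_eq_zero, isTop_iff_val_add_one_eq, Fin.val_rev]
    omega
  simp only [StartsWithMin, StartsWithMax, Equiv.Perm.mul_apply, Fin.revPerm_apply, isBot_rev]

section DirectSum

/-- The direct sum `π ⊕ τ` of permutations: the word of `π` followed by the word of `τ` with all its
values raised by the length of `π`. -/
def directSum {p q : ℕ} (π : Equiv.Perm (Fin p)) (τ : Equiv.Perm (Fin q)) :
    Equiv.Perm (Fin (p + q)) :=
  finSumFinEquiv.permCongr (Equiv.sumCongr π τ)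

variable {p q : ℕ} (π : Equiv.Perm (Fin p)) (τ : Equiv.Perm (Fin q))

@[simp]
theorem directSum_castAdd (i : Fin p) : directSum π τ (Fin.castAdd q i) = Fin.castAdd q (π i) := by
  simp [directSum, Equiv.permCongr_apply]

@[simp]
theorem directSum_natAdd (j : Fin q) : directSum π τ (Fin.natAdd p j) = Fin.natAdd p (τ j) := by
  simp [directSum, Equiv.permCongr_apply]

theorem directSum_injective :
    Function.Injective fun x : Equiv.Perm (Fin p) × Equiv.Perm (Fin q) => directSum x.1 x.2 :=
  finSumFinEquiv.permCongr.injective.comp Equiv.Perm.sumCongrHom_injective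

theorem exists_directSum_eq {σ : Equiv.Perm (Fin (p + q))}
    (h : ∀ i : Fin p, (σ (Fin.castAdd q i) : ℕ) < p) : ∃ π τ, directSum π τ = σ := by
  have maps_inl : Set.MapsTo (finSumFinEquiv.symm.permCongr σ)
      (Set.range (Sum.inl : Fin p → Fin p ⊕ Fin q)) (Set.range Sum.inl) := by
    rintro _ ⟨i, rfl⟩
    exact ⟨⟨_, h i⟩, by simp [Equiv.permCongr_apply, Equiv.eq_symm_apply]⟩
  obtain ⟨⟨π, τ⟩, hπτ⟩ := Equiv.Perm.mem_sumCongrHom_range_of_perm_mapsTo_inl maps_inl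
  exact ⟨π, τ, finSumFinEquiv.permCongr.eq_symm_apply.mp hπτ⟩

theorem card_eq_mul_of_directSum_iff {P : Equiv.Perm (Fin (p + q)) → Prop}
    {Q : Equiv.Perm (Fin p) → Prop} {R : Equiv.Perm (Fin q) → Prop}
    (hP : ∀ σ, P σ → ∀ i : Fin p, (σ (Fin.castAdd q i) : ℕ) < p)
    (hPQR : ∀ π τ, P (directSum π τ) ↔ Q π ∧ R τ) :
    Nat.card {σ // P σ} = Nat.card {π // Q π} * Nat.card {τ // R τ} := by
  rw [← Nat.card_prod, ← Nat.card_congr Equiv.subtypeProdEquivProd]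
  refine (Nat.card_eq_of_bijective
    (Subtype.map (fun x => directSum x.1 x.2) fun x => (hPQR x.1 x.2).mpr) ⟨?_, ?_⟩).symm
  · exact Subtype.map_injective _ directSum_injective
  · rintro ⟨σ, hσ⟩
    obtain ⟨π, τ, rfl⟩ := exists_directSum_eq (hP σ hσ)
    exact ⟨⟨(π, τ), (hPQR π τ).mp hσ⟩, rfl⟩

theorem castAdd_lt_natAdd (i : Fin p) (j : Fin q) : Fin.castAdd q i < Fin.natAdd p j := by
  rw [Fin.lt_def, Fin.val_castAdd, Fin.val_natAdd]
  omega

theorem isKing_directSum_iff :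
    IsKing (directSum π τ) ↔ IsKing π ∧ IsKing τ ∧ ¬ (EndsWithMax π ∧ StartsWithMin τ) := by
  have castAdd_covBy_natAdd (i : Fin p) (j : Fin q) :
      Fin.castAdd q i ⋖ Fin.natAdd p j ↔ IsTop i ∧ IsBot j := by
    simp only [Fin.covBy_iff, Nat.covBy_iff_add_one_eq, isTop_iff_val_add_one_eq,
      isBot_iff_val_eq_zero, Fin.val_castAdd, Fin.val_natAdd]
    omega
  have not_natAdd_covBy_castAdd (i : Fin p) (j : Fin q) :
      ¬ Fin.natAdd p j ⋖ Fin.castAdd q i :=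
    fun h => h.lt.not_gt (castAdd_lt_natAdd i j)
  have castAdd_covBy_castAdd (i j : Fin p) : Fin.castAdd q i ⋖ Fin.castAdd q j ↔ i ⋖ j := by
    simp
  have natAdd_covBy_natAdd (i j : Fin q) : Fin.natAdd p i ⋖ Fin.natAdd p j ↔ i ⋖ j := by
    simp [Nat.covBy_iff_add_one_eq, add_assoc]
  simp only [isKing_iff_covBy, Fin.forall_fin_add, directSum_castAdd, directSum_natAdd,
    castAdd_covBy_castAdd, natAdd_covBy_natAdd, castAdd_covBy_natAdd, not_natAdd_covBy_castAdd,
    EndsWithMax, StartsWithMin]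
  grind

theorem isBot_castAdd_iff {i : Fin p} : IsBot (Fin.castAdd q i) ↔ IsBot i := by
  rw [isBot_iff_val_eq_zero, isBot_iff_val_eq_zero, Fin.val_castAdd]

theorem occP_directSum_iff (i : Fin p) (j : Fin q) :
    OccP (directSum π τ) (Fin.castAdd q i) (Fin.natAdd p j) ↔
      (IsBot i ∧ IsTop (π i)) ∧ IsBot j ∧ IsBot (τ j) := by
  have castAdd_lt_castAdd (i k : Fin p) : Fin.castAdd q i < Fin.castAdd q k ↔ i < k := Iff.rfl
  have isBot_iff {n : ℕ} (i : Fin n) : (∀ k, ¬ k < i) ↔ IsBot i :=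
    forall_congr' fun _ => not_lt
  simp only [OccP, Fin.forall_fin_add, directSum_castAdd, directSum_natAdd, castAdd_lt_natAdd,
    (castAdd_lt_natAdd _ _).not_gt, castAdd_lt_castAdd, Fin.natAdd_lt_natAdd_iff, true_and,
    not_false_eq_true, implies_true, true_imp_iff, imp_false, isBot_iff, isBot_castAdd_iff]
  constructor
  · rintro ⟨hi, ⟨hπ, hj⟩, hτ⟩
    exact ⟨⟨hi, (isTop_apply_iff_of_isBot π hi).mpr hπ⟩, hj,
      (isBot_apply_iff_of_isBot τ hj).mpr hτ⟩
  · rintro ⟨⟨hi, hπ⟩, hj, hτ⟩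
    exact ⟨hi, ⟨(isTop_apply_iff_of_isBot π hi).mp hπ, hj⟩,
      (isBot_apply_iff_of_isBot τ hj).mp hτ⟩

theorem startsWithMin_directSum (hπ : StartsWithMin π) : StartsWithMin (directSum π τ) := by
  obtain ⟨i, hi, hπi⟩ := hπ
  exact ⟨Fin.castAdd q i, isBot_castAdd_iff.mpr hi,
    (directSum_castAdd π τ i).symm ▸ isBot_castAdd_iff.mpr hπi⟩

end DirectSum

section Occurrences

variable {n : ℕ} {σ : Equiv.Perm (Fin n)} {i j : Fin n}

theorem OccP.isBot_fst (h : OccP σ i j) : IsBot i :=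
  fun k => not_lt.mp (h.2.2.1 k)

theorem OccP.lt_snd_iff (h : OccP σ i j) (k : Fin n) : k < j ↔ σ k ≤ σ i := by
  have hi := h.isBot_fst
  obtain ⟨-, hσ, -, hbefore, hafter⟩ := h
  constructor
  · intro hk
    rcases (hi k).eq_or_lt with rfl | hik
    · exact le_rfl
    · exact (hbefore k hik hk).le
  · intro hk
    by_contra! hjk
    rcases hjk.eq_or_lt with rfl | hjk
    · exact hk.not_gt hσ
    · exact hk.not_gt (hσ.trans (hafter k hjk))

theorem OccP.val_apply_fst_add_one (h : OccP σ i j) : (σ i : ℕ) + 1 = j := by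
  have hmap : (Finset.Iio j).map σ.toEmbedding = Finset.Iic (σ i) := by
    ext v
    simp [Finset.mem_map_equiv, h.lt_snd_iff]
  simpa using (congrArg Finset.card hmap).symm

theorem OccP.val_apply_lt (h : OccP σ i j) {k : Fin n} (hk : k < j) : (σ k : ℕ) < j := by
  have := Fin.le_def.mp ((h.lt_snd_iff k).mp hk)
  have := h.val_apply_fst_add_one
  omega

theorem OccP.unique {i' j' : Fin n} (h : OccP σ i j) (h' : OccP σ i' j') : i = i' ∧ j = j' := by
  obtain rfl : i = i' := (h.isBot_fst _).antisymm (h'.isBot_fst _)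
  exact ⟨rfl, Fin.ext (h.val_apply_fst_add_one.symm.trans h'.val_apply_fst_add_one)⟩

theorem occP_le_one (σ : Equiv.Perm (Fin n)) : occP σ ≤ 1 := by
  refine Finite.card_le_one_iff_subsingleton.mpr ⟨fun x y => Subtype.ext ?_⟩
  exact Prod.ext_iff.mpr (x.2.unique y.2)

/-- The pattern occurs in `σ` with second position `p`. The position is a natural number so that `p`
can run over the antidiagonal of `n` without casts between the types `Fin (p + q)` and `Fin n`. -/
def HasOccAt (σ : Equiv.Perm (Fin n)) (p : ℕ) : Prop :=
  ∃ i j : Fin n, (j : ℕ) = p ∧ OccP σ i j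

open Classical in
theorem occP_eq_card_antidiagonal (σ : Equiv.Perm (Fin n)) :
    occP σ = Finset.card {pq ∈ Finset.HasAntidiagonal.antidiagonal n | HasOccAt σ pq.1} := by
  rw [occP, Nat.card_eq_fintype_card, Fintype.card_subtype]
  refine Finset.card_bij (fun x _ => ((x.2 : ℕ), n - x.2)) ?_ ?_ ?_
  · rintro ⟨i, j⟩ hij
    simp only [Finset.mem_filter, Finset.HasAntidiagonal.mem_antidiagonal]
    exact ⟨by omega, i, j, rfl, (Finset.mem_filter.mp hij).2⟩
  · rintro x hx y hy -
    exact Prod.ext_iff.mpr ((Finset.mem_filter.mp hx).2.unique (Finset.mem_filter.mp hy).2)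
  · rintro ⟨p, q⟩ hpq
    obtain ⟨hsum, i, j, rfl, hij⟩ := Finset.mem_filter.mp hpq
    rw [Finset.HasAntidiagonal.mem_antidiagonal] at hsum
    exact ⟨(i, j), by simpa using hij, by simp [← hsum]⟩

theorem hasOccAt_directSum_iff {p q : ℕ} (π : Equiv.Perm (Fin p)) (τ : Equiv.Perm (Fin q)) :
    HasOccAt (directSum π τ) p ↔ StartsWithMax π ∧ StartsWithMin τ := by
  constructor
  · rintro ⟨i, j, hj, h⟩
    obtain ⟨i, rfl⟩ : ∃ i' : Fin p, Fin.castAdd q i' = i :=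
      ⟨i.castLT ((Fin.lt_def.mp h.1).trans_eq hj), rfl⟩
    obtain ⟨j, rfl⟩ : ∃ j' : Fin q, Fin.natAdd p j' = j :=
      ⟨⟨0, by omega⟩, Fin.ext (by simp [hj])⟩
    obtain ⟨hπ, hτ⟩ := (occP_directSum_iff π τ i j).mp h
    exact ⟨⟨i, hπ⟩, j, hτ⟩
  · rintro ⟨⟨i, hπ⟩, j, hτ⟩
    exact ⟨_, _, by simp [isBot_iff_val_eq_zero.mp hτ.1],
      (occP_directSum_iff π τ i j).mpr ⟨hπ, hτ⟩⟩

end Occurrences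

section Counting

/-- The number of king permutations of length `n` starting with their minimum. -/
noncomputable def kingMinCount (n : ℕ) : ℕ :=
  Nat.card {σ : Equiv.Perm (Fin n) // IsKing σ ∧ StartsWithMin σ}

theorem kingMinCount_zero : kingMinCount 0 = 0 :=
  Nat.card_eq_zero.mpr (.inl ⟨fun ⟨_, _, i, _⟩ => i.elim0⟩)

theorem kingMinCount_one : kingMinCount 1 = 1 := by
  rw [kingMinCount, Nat.card_eq_one_iff_unique]
  exact ⟨inferInstance, ⟨1, isKing_of_subsingleton 1, 0, isBot_iff_val_eq_zero.mpr rfl,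
    isBot_iff_val_eq_zero.mpr rfl⟩⟩

theorem card_isKing_startsWithMax (n : ℕ) :
    Nat.card {σ : Equiv.Perm (Fin n) // IsKing σ ∧ StartsWithMax σ} = kingMinCount n :=
  Nat.card_congr <| (Equiv.mulLeft Fin.revPerm).subtypeEquiv fun _ =>
    and_congr isKing_revPerm_mul_iff.symm startsWithMin_revPerm_mul_iff.symm

theorem kingMinCount_one_add (n : ℕ) :
    kingMinCount (1 + n) =
      Nat.card {τ : Equiv.Perm (Fin n) // IsKing τ ∧ ¬ StartsWithMin τ} := by
  have startsWithMin (π : Equiv.Perm (Fin 1)) : StartsWithMin π :=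
    ⟨0, isBot_iff_val_eq_zero.mpr rfl, isBot_iff_val_eq_zero.mpr (by simp)⟩
  have endsWithMax (π : Equiv.Perm (Fin 1)) : EndsWithMax π :=
    ⟨0, isTop_iff_val_add_one_eq.mpr rfl, isTop_iff_val_add_one_eq.mpr (by simp)⟩
  rw [kingMinCount, card_eq_mul_of_directSum_iff (Q := fun _ => True), Nat.card_subtype_true,
    Nat.card_unique, one_mul]
  · rintro σ ⟨-, i, hi, hσi⟩ k
    obtain rfl : i = Fin.castAdd n k := Fin.ext (by simp [isBot_iff_val_eq_zero.mp hi])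
    rw [isBot_iff_val_eq_zero.mp hσi]
    exact one_pos
  · intro π τ
    simp [isKing_directSum_iff, isKing_of_subsingleton, startsWithMin_directSum, startsWithMin,
      endsWithMax]

theorem kingMinCount_one_add_add_kingMinCount (n : ℕ) :
    kingMinCount (1 + n) + kingMinCount n = kingCount n := by
  classical
  rw [kingMinCount_one_add]
  simp only [kingMinCount, kingCount, Nat.card_eq_fintype_card, Fintype.card_subtype,
    ← Finset.filter_filter]
  rw [add_comm, Finset.card_filter_add_card_filter_not]

theorem card_isKing_hasOccAt (p q : ℕ) :
    Nat.card {σ : Equiv.Perm (Fin (p + q)) // IsKing σ ∧ HasOccAt σ p} =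
      (if p = 1 then 0 else kingMinCount p) * kingMinCount q := by
  have hleft : Nat.card {π : Equiv.Perm (Fin p) // (IsKing π ∧ StartsWithMax π) ∧ p ≠ 1} =
      if p = 1 then 0 else kingMinCount p := by
    split_ifs with hp <;> simp [hp, card_isKing_startsWithMax]
  rw [← hleft, kingMinCount]
  refine card_eq_mul_of_directSum_iff ?_ fun π τ => ?_
  · rintro σ ⟨-, i, j, hj, h⟩ k
    exact (h.val_apply_lt (Fin.lt_def.mpr (by simp [hj]))).trans_eq hj
  · rw [isKing_directSum_iff, hasOccAt_directSum_iff]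
    have := endsWithMax_iff_of_startsWithMax (σ := π)
    tauto

open Classical in
theorem sum_occP_isKing (n : ℕ) :
    ∑ σ : Equiv.Perm (Fin n) with IsKing σ, occP σ =
      ∑ pq ∈ Finset.HasAntidiagonal.antidiagonal n,
        (if pq.1 = 1 then 0 else kingMinCount pq.1) * kingMinCount pq.2 := by
  simp only [occP_eq_card_antidiagonal]
  refine (Finset.sum_card_bipartiteAbove_eq_sum_card_bipartiteBelow
    fun (σ : Equiv.Perm (Fin n)) (pq : ℕ × ℕ) => HasOccAt σ pq.1).trans ?_
  refine Finset.sum_congr rfl fun pq hpq => ?_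
  obtain rfl := Finset.HasAntidiagonal.mem_antidiagonal.mp hpq
  rw [← card_isKing_hasOccAt, Nat.card_eq_fintype_card, Fintype.card_subtype,
    ← Finset.filter_filter]
  rfl

end Counting

section PowerSeries

theorem pow_eq_one_sub_of_le_one {R : Type*} [Ring R] (x : R) {k : ℕ} (hk : k ≤ 1) :
    x ^ k = 1 - (1 - x) * k := by
  interval_cases k <;> simp

/-- The generating function `M(t)` of king permutations starting with their minimum. -/
noncomputable def kingMinSeries : PowerSeries (Polynomial ℚ) :=
  PowerSeries.mk fun n => (kingMinCount n : Polynomial ℚ)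

theorem one_add_T_mul_kingMinSeries : (1 + T) * kingMinSeries = T * kingAu := by
  ext1 n
  cases n with
  | zero => simp [T, kingMinSeries, kingMinCount_zero]
  | succ n =>
    simp [add_mul, T, kingMinSeries, kingAu, PowerSeries.coeff_succ_X_mul,
      ← kingMinCount_one_add_add_kingMinCount, add_comm 1 n]

theorem kingMinSeries_sub_T :
    kingMinSeries - T =
      PowerSeries.mk fun p => ((if p = 1 then 0 else kingMinCount p : ℕ) : Polynomial ℚ) := by
  ext1 p
  rw [map_sub, T, PowerSeries.coeff_X, kingMinSeries, PowerSeries.coeff_mk, PowerSeries.coeff_mk]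
  split_ifs with hp <;> simp [hp, kingMinCount_one]

theorem Etu_eq_kingAu_sub :
    Etu = kingAu - (1 - U) * ((kingMinSeries - T) * kingMinSeries) := by
  classical
  have hU : 1 - U = PowerSeries.C (1 - Polynomial.X) := by simp [U]
  ext1 n
  have hE : PowerSeries.coeff n Etu =
      (kingCount n : Polynomial ℚ) - (1 - Polynomial.X) *
        ((∑ σ : Equiv.Perm (Fin n) with IsKing σ, occP σ : ℕ) : Polynomial ℚ) := by
    rw [Etu, PowerSeries.coeff_mk, ← Finset.sum_filter, kingCount, Nat.card_eq_fintype_card,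
      Fintype.card_subtype, Nat.cast_sum, Finset.mul_sum, Finset.cast_card,
      ← Finset.sum_sub_distrib]
    exact Finset.sum_congr rfl fun σ _ => pow_eq_one_sub_of_le_one _ (occP_le_one σ)
  rw [hE, sum_occP_isKing, hU, kingMinSeries_sub_T, map_sub, PowerSeries.coeff_C_mul,
    PowerSeries.coeff_mul, kingAu, kingMinSeries]
  simp only [PowerSeries.coeff_mk, Nat.cast_sum, Nat.cast_mul]

end PowerSeries

theorem statement_10 :
    (1 + T) ^ 2 * Etu
      = ((1 + T) ^ 2 + T ^ 2 * (1 - U) * (1 + T) - T ^ 2 * (1 - U) * kingAu)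
          * kingAu := by
  have hM := one_add_T_mul_kingMinSeries
  calc (1 + T) ^ 2 * Etu
      = (1 + T) ^ 2 * kingAu - (1 - U) * ((1 + T) * kingMinSeries - T * (1 + T)) *
          ((1 + T) * kingMinSeries) := by rw [Etu_eq_kingAu_sub]; ring
    _ = (1 + T) ^ 2 * kingAu - (1 - U) * (T * kingAu - T * (1 + T)) * (T * kingAu) := by rw [hM]
    _ = _ := by ring
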